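/- For each ordinal α < ε₀ there exists a natural number N > 0 such that ω_N →_N α+1. -/

import Mathlib

/-!
The relation `→ₙ` is compatible with the Cantor normal form: every nonzero ordinal is uniquely
`ω ^ γ * (μ + 1)`, and in this shape the three clauses of the fundamental sequence become equations
(`fundSeq_succ`, `fundSeq_opow_succ`, `fundSeq_opow_limit`).  From these, below `ε₀`,

* `→ₙ` is preserved by adding a summand `ω ^ γ * μ` on the left of ordinals `≤ ω ^ γ`
  (`stepDown_add`) and by `β ↦ ω ^ β` (`stepDown_opow`);
* every ordinal steps down to `0`, and every nonzero one to `1`.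

For a limit `β` the members of the fundamental sequence are cofinal in `β`, and
`{β}(n) →ₙ {β}(k)` whenever `k ≤ n` (`stepDown_fundSeq`).  Well-founded induction on `β` then shows
that for `α < β < ε₀` the relation `β →ₙ α` holds for all sufficiently large `n`
(`eventually_stepDown`).  Given `α < ε₀`, pick `m` with `α + 1 ≤ ω_m`; for large `N` one has
`ω_N = ω_m ^ (ω_{N-m}) →_N ω_m →_N α + 1`, the first part because `ω_{N-m} →_N 1` lifts through `m`
exponentiations.
-/


open Ordinal
open scoped Classical

noncomputable section

/-- `omegaTower m α` is `ω_m^α`: the `m`-fold iterated `ω`-power tower on top of `α`. -/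
noncomputable def omegaTower : ℕ → Ordinal.{0} → Ordinal.{0}
  | 0, α => α
  | m + 1, α => omega0 ^ (omegaTower m α)

/-- `ε₀`, the least ordinal `ε` with `ω ^ ε = ε`. -/
noncomputable def eps0 : Ordinal.{0} := Ordinal.nfp (fun a => omega0 ^ a) 0

/-- The fundamental sequence `{α}(n)` for ordinals below `ε₀`:
`{0}(n) = 0`, `{β+1}(n) = β`, and for a limit `α = β + ω^γ·(k+1)` (with `γ > 0` the least
exponent of the Cantor normal form) we set `{α}(n) = β + ω^γ·k + ω^δ·(n+1)` if `γ = δ+1`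
and `{α}(n) = β + ω^γ·k + ω^{{γ}(n)}` if `γ` is a limit.  Here `γ` is recovered as the
largest exponent with `ω^γ ∣ α`, and `β + ω^γ·k = ω^γ · pred (α / ω^γ)`. -/
noncomputable def fundSeq (α : Ordinal.{0}) (n : ℕ) : Ordinal.{0} :=
  if _h0 : α = 0 then 0
  else if hs : ∃ β, α = β + 1 then Classical.choose hs
  else
    let γ : Ordinal := sSup {c : Ordinal | omega0 ^ c ∣ α}
    if hγ : ∃ δ, γ = δ + 1 then
      omega0 ^ γ * Ordinal.pred (α / omega0 ^ γ) +
        omega0 ^ (Classical.choose hγ) * ((n : Ordinal) + 1)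
    else if hlt : γ < α then
      omega0 ^ γ * Ordinal.pred (α / omega0 ^ γ) + omega0 ^ (fundSeq γ n)
    else 0
termination_by α
decreasing_by exact hlt

/-- The step-down relation `β →_n γ`: there is a finite sequence from `β` to `γ`
each step of which descends to the `n`-th member of the fundamental sequence. -/
def stepDown (n : ℕ) (β γ : Ordinal.{0}) : Prop :=
  Relation.ReflTransGen (fun a b => fundSeq a n = b) β γ

/-- The fast-growing hierarchy `F_α` for `α < ε₀`:
`F_0(x) = x+1`, `F_{α+1}(x) = F_α^[x+1](x)`, `F_λ(x) = F_{{λ}(x)}(x)` for limits. -/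
noncomputable def fgh (α : Ordinal.{0}) : ℕ → ℕ :=
  if _h0 : α = 0 then fun x => x + 1
  else if hs : ∃ β, α = β + 1 then fun x => (fgh (Classical.choose hs))^[x + 1] x
  else fun x => if hlt : fundSeq α x < α then fgh (fundSeq α x) x else 0
termination_by α
decreasing_by
  · calc Classical.choose hs < Classical.choose hs + 1 := by
          rw [Ordinal.add_one_eq_succ]; exact Order.lt_succ _
      _ = α := (Classical.choose_spec hs).symm
  · exact hlt

/-- `F_{ε₀}(x) := F_{ω_{x+1}}(x)`. -/
noncomputable def Feps0 (x : ℕ) : ℕ := fgh (omegaTower (x + 1) 1) x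

/-- The inverse `F_{ε₀}^{-1}(x) := max({z ≤ x : F_{ε₀}(z) ≤ x} ∪ {0})`. -/
noncomputable def Feps0Inv (x : ℕ) : ℕ :=
  sSup ({z : ℕ | z ≤ x ∧ Feps0 z ≤ x} ∪ {0})

/-- The slow function `F^⋄_{ε₀}(x) := F_{ω_{F_{ε₀}^{-1}(x)+1}}(x)`. -/
noncomputable def slowFeps0 (x : ℕ) : ℕ := fgh (omegaTower (Feps0Inv x + 1) 1) x

/-- The slow hierarchy `F^⋄_{ε₀+α}` for `α < ε₀`:
`F^⋄_{ε₀+0} = F^⋄_{ε₀}`, `F^⋄_{ε₀+α+1}(n) = (F^⋄_{ε₀+α})^[n+1](n)`, and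
`F^⋄_{ε₀+λ}(n) = F^⋄_{ε₀+{λ}(n)}(n)` for limits `λ`. -/
noncomputable def slowF (α : Ordinal.{0}) : ℕ → ℕ :=
  if _h0 : α = 0 then slowFeps0
  else if hs : ∃ β, α = β + 1 then fun n => (slowF (Classical.choose hs))^[n + 1] n
  else fun n => if hlt : fundSeq α n < α then slowF (fundSeq α n) n else 0
termination_by α
decreasing_by
  · calc Classical.choose hs < Classical.choose hs + 1 := by
          rw [Ordinal.add_one_eq_succ]; exact Order.lt_succ _
      _ = α := (Classical.choose_spec hs).symm
  · exact hlt

/-- A nonempty finite set of naturals is *large* if its cardinality is at least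
its minimum. -/
def IsLargeSet (Y : Finset ℕ) : Prop := ∃ hY : Y.Nonempty, Y.min' hY ≤ Y.card

/-- The Paris–Harrington statement `PH(k, m, n, N)`: every `k`-colouring of the
`n`-element subsets of `{0, …, N-1}` admits a large homogeneous set with at least
`m` elements. -/
def PH (k m n N : ℕ) : Prop :=
  ∀ f : Finset ℕ → Fin k,
    ∃ Y : Finset ℕ, Y ⊆ Finset.range N ∧ m ≤ Y.card ∧ IsLargeSet Y ∧
      ∀ s t : Finset ℕ, s ⊆ Y → t ⊆ Y → s.card = n → t.card = n → f s = f t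

/-- `σ(n, k)`: the least `N` such that every `k`-colouring of the `n`-element subsets of
`{0, …, N-1}` admits a large homogeneous set with at least `n+1` elements. -/
noncomputable def sigmaPH (n k : ℕ) : ℕ := sInf {N | PH k (n + 1) n N}

/-! ### Ordinals below `ε₀` -/

lemma one_lt_om : (1 : Ordinal.{0}) < omega0 := one_lt_omega0

lemma eps0_opow {a : Ordinal.{0}} (h : a < eps0) : omega0 ^ a < eps0 :=
  (apply_lt_nfp (isNormal_opow one_lt_om)).2 h

lemma lt_opow_self {a : Ordinal.{0}} (h : a < eps0) : a < omega0 ^ a := by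
  by_contra hc
  have := nfp_le_fp (f := fun a => omega0 ^ a) (isNormal_opow one_lt_om).monotone
    (zero_le (a := a)) (not_lt.1 hc)
  exact absurd h (not_lt.2 this)

lemma self_le_opow_mul (g m : Ordinal.{0}) : omega0 ^ g ≤ omega0 ^ g * (m + 1) := by
  rw [mul_add_one]; exact le_add_self

lemma exp_lt_eps0 {g m : Ordinal.{0}} (h : omega0 ^ g * (m + 1) < eps0) : g < eps0 :=
  ((right_le_opow g one_lt_om).trans (self_le_opow_mul g m)).trans_lt h

/-! ### The last term of the Cantor normal form -/

lemma decomp_shift {c g : Ordinal.{0}} (h : c ≤ g) (q m : Ordinal.{0}) :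
    omega0 ^ g * q + omega0 ^ c * (m + 1) = omega0 ^ c * (omega0 ^ (g - c) * q + m + 1) := by
  rw [add_assoc _ m 1, mul_add _ _ (m + 1), ← mul_assoc, ← opow_add,
    Ordinal.add_sub_cancel_of_le h]

lemma exists_decomp (a : Ordinal.{0}) : a ≠ 0 → ∃ g m : Ordinal.{0}, a = omega0 ^ g * (m + 1) := by
  induction a using WellFoundedLT.induction with
  | _ a ih =>
    intro h0
    have hda := div_add_mod a (omega0 ^ log omega0 a)
    by_cases hr : a % (omega0 ^ log omega0 a) = 0
    · obtain ⟨n, hn⟩ := lt_omega0.1 (div_opow_log_lt a one_lt_om)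
      rw [hr, add_zero, hn] at hda
      cases n with
      | zero => simp at hda; exact absurd hda.symm h0
      | succ n => exact ⟨log omega0 a, n, by rw [← Nat.cast_add_one, hda]⟩
    · obtain ⟨c, m, hcm⟩ := ih _ (mod_opow_log_lt_self _ h0) hr
      have hc : c ≤ log omega0 a := by
        have h1 : omega0 ^ c < omega0 ^ log omega0 a :=
          ((self_le_opow_mul c m).trans_eq hcm.symm).trans_lt
            (mod_lt _ (opow_ne_zero _ omega0_ne_zero))
        exact ((opow_lt_opow_iff_right one_lt_om).1 h1).le
      exact ⟨c, _, by rw [← decomp_shift hc, ← hcm, hda]⟩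

lemma not_succ_of_dvd {a b : Ordinal.{0}} (h : omega0 ∣ a) : a ≠ b + 1 := by
  rintro rfl
  obtain ⟨x, hx⟩ := h
  rcases eq_or_ne x 0 with rfl | hx0
  · simp at hx
  · have := isSuccLimit_mul_left isSuccLimit_omega0 (pos_iff_ne_zero.2 hx0)
    rw [← hx] at this
    simp at this

lemma dvd_decomp (g m c : Ordinal.{0}) : omega0 ^ c ∣ omega0 ^ g * (m + 1) ↔ c ≤ g := by
  constructor
  · intro h
    by_contra hc
    obtain ⟨x, hx⟩ := (opow_dvd_opow omega0 (Order.succ_le_of_lt (not_le.1 hc))).trans h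
    rw [opow_succ, mul_assoc] at hx
    have := mul_left_cancel₀ (opow_ne_zero g omega0_ne_zero) hx
    exact not_succ_of_dvd ⟨x, rfl⟩ this.symm
  · intro h
    exact (opow_dvd_opow omega0 h).trans (dvd_mul_right _ _)

lemma sSup_decomp (g m : Ordinal.{0}) :
    sSup {c : Ordinal | omega0 ^ c ∣ omega0 ^ g * (m + 1)} = g := by
  simp only [dvd_decomp]
  exact csSup_Iic

lemma not_succ_opow {g : Ordinal.{0}} (hg : g ≠ 0) (m : Ordinal.{0}) :
    ¬ ∃ b, omega0 ^ g * (m + 1) = b + 1 := by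
  rintro ⟨b, hb⟩
  refine not_succ_of_dvd ?_ hb
  have := (dvd_decomp g m 1).2 (Order.one_le_iff_pos.2 (pos_iff_ne_zero.2 hg))
  simpa using this

/-! ### The clauses of the fundamental sequence -/

lemma fundSeq_zero (n : ℕ) : fundSeq 0 n = 0 := by
  rw [fundSeq]; simp

lemma fundSeq_succ (b : Ordinal.{0}) (n : ℕ) : fundSeq (b + 1) n = b := by
  have hs : ∃ c, b + 1 = c + 1 := ⟨b, rfl⟩
  rw [fundSeq, dif_neg (by simp), dif_pos hs]
  have := Classical.choose_spec hs
  exact (Order.add_one_inj.1 this).symm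

lemma pred_div_decomp (g m : Ordinal.{0}) :
    Ordinal.pred (omega0 ^ g * (m + 1) / omega0 ^ g) = m := by
  rw [mul_div_cancel _ (opow_ne_zero g omega0_ne_zero), pred_add_one]

lemma decomp_ne_zero (g m : Ordinal.{0}) : omega0 ^ g * (m + 1) ≠ 0 :=
  mul_ne_zero (opow_ne_zero g omega0_ne_zero) (by simp)

lemma fundSeq_opow_succ (d m : Ordinal.{0}) (n : ℕ) :
    fundSeq (omega0 ^ (d + 1) * (m + 1)) n =
      omega0 ^ (d + 1) * m + omega0 ^ d * ((n : Ordinal) + 1) := by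
  have hs : ∃ c, d + 1 = c + 1 := ⟨d, rfl⟩
  have hch : Classical.choose hs = d := (Order.add_one_inj.1 (Classical.choose_spec hs)).symm
  rw [fundSeq, dif_neg (decomp_ne_zero _ _), dif_neg (not_succ_opow (by simp) m)]
  simp only [sSup_decomp, pred_div_decomp]
  rw [dif_pos hs, hch]

lemma fundSeq_opow_limit {g : Ordinal.{0}} (m : Ordinal.{0}) (n : ℕ) (hg : Order.IsSuccLimit g)
    (he : g < eps0) :
    fundSeq (omega0 ^ g * (m + 1)) n = omega0 ^ g * m + omega0 ^ (fundSeq g n) := by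
  have hs : ¬ ∃ c, g = c + 1 := by
    rintro ⟨c, rfl⟩
    simp at hg
  rw [fundSeq, dif_neg (decomp_ne_zero _ _), dif_neg (not_succ_opow hg.ne_zero m)]
  simp only [sSup_decomp, pred_div_decomp]
  rw [dif_neg hs, dif_pos ((lt_opow_self he).trans_le (self_le_opow_mul g m))]

lemma fundSeq_opow_succ' (d : Ordinal.{0}) (n : ℕ) :
    fundSeq (omega0 ^ (d + 1)) n = omega0 ^ d * ((n : Ordinal) + 1) := by
  simpa using fundSeq_opow_succ d 0 n

lemma fundSeq_opow_limit' {g : Ordinal.{0}} (n : ℕ) (hg : Order.IsSuccLimit g)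
    (he : g < eps0) : fundSeq (omega0 ^ g) n = omega0 ^ (fundSeq g n) := by
  simpa using fundSeq_opow_limit 0 n hg he

lemma ord_cases (g : Ordinal.{0}) : g = 0 ∨ (∃ d, g = d + 1) ∨ Order.IsSuccLimit g := by
  rcases zero_or_succ_or_isSuccLimit g with h | ⟨d, hd⟩ | h
  · exact Or.inl h
  · exact Or.inr (Or.inl ⟨d, by simpa using hd.symm⟩)
  · exact Or.inr (Or.inr h)

/-- Case distinction along the clauses defining `fundSeq`. -/
lemma fund_cases (a : Ordinal.{0}) : a = 0 ∨ (∃ b, a = b + 1) ∨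
    (∃ d m : Ordinal.{0}, a = omega0 ^ (d + 1) * (m + 1)) ∨
    (∃ g m : Ordinal.{0}, Order.IsSuccLimit g ∧ a = omega0 ^ g * (m + 1)) := by
  rcases eq_or_ne a 0 with h | h
  · exact Or.inl h
  obtain ⟨g, m, rfl⟩ := exists_decomp a h
  rcases ord_cases g with rfl | ⟨d, rfl⟩ | hg
  · exact Or.inr (Or.inl ⟨m, by simp⟩)
  · exact Or.inr (Or.inr (Or.inl ⟨d, m, rfl⟩))
  · exact Or.inr (Or.inr (Or.inr ⟨g, m, hg, rfl⟩))

lemma fundSeq_lt (n : ℕ) (a : Ordinal.{0}) : a < eps0 → a ≠ 0 → fundSeq a n < a := by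
  induction a using WellFoundedLT.induction with
  | _ a ih =>
    intro he h0
    rcases fund_cases a with rfl | ⟨b, rfl⟩ | ⟨d, m, rfl⟩ | ⟨g, m, hg, rfl⟩
    · exact absurd rfl h0
    · rw [fundSeq_succ]; exact lt_add_one b
    · rw [fundSeq_opow_succ, mul_add_one _ m, add_lt_add_iff_left]
      have := opow_mul_lt_opow (natCast_lt_omega0 (n + 1)) (lt_add_one d)
      exact_mod_cast this
    · have hge := exp_lt_eps0 he
      rw [fundSeq_opow_limit m n hg hge, mul_add_one _ m, add_lt_add_iff_left,
        opow_lt_opow_iff_right one_lt_om]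
      exact ih g ((lt_opow_self hge).trans_le (self_le_opow_mul g m)) hge hg.ne_zero

lemma fundSeq_le (n : ℕ) {a : Ordinal.{0}} (he : a < eps0) : fundSeq a n ≤ a := by
  rcases eq_or_ne a 0 with rfl | h
  · rw [fundSeq_zero]
  · exact (fundSeq_lt n a he h).le

/-! ### Closure properties of the step-down relation -/

lemma stepDown_step (n : ℕ) (a : Ordinal.{0}) : stepDown n a (fundSeq a n) :=
  Relation.ReflTransGen.single rfl

lemma stepDown.trans' {n : ℕ} {a b c : Ordinal.{0}} (h : stepDown n a b) (h' : stepDown n b c) :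
    stepDown n a c := Relation.ReflTransGen.trans h h'

lemma stepDown_zero (n : ℕ) (a : Ordinal.{0}) : a < eps0 → stepDown n a 0 := by
  induction a using WellFoundedLT.induction with
  | _ a ih =>
    intro he
    rcases eq_or_ne a 0 with rfl | h0
    · exact Relation.ReflTransGen.refl
    · have hl := fundSeq_lt n a he h0
      exact (stepDown_step n a).trans' (ih _ hl (hl.trans he))

lemma eq_one_of_fundSeq_eq_zero {n : ℕ} {a : Ordinal.{0}} (he : a < eps0) (h0 : a ≠ 0)
    (h : fundSeq a n = 0) : a = 1 := by
  rcases fund_cases a with rfl | ⟨b, rfl⟩ | ⟨d, m, rfl⟩ | ⟨g, m, hg, rfl⟩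
  · exact absurd rfl h0
  · rw [fundSeq_succ] at h; simp [h]
  · rw [fundSeq_opow_succ] at h
    exact absurd (nonpos_iff_eq_zero.1 (le_add_self.trans h.le)) (decomp_ne_zero d n)
  · rw [fundSeq_opow_limit m n hg (exp_lt_eps0 he)] at h
    exact absurd (nonpos_iff_eq_zero.1 (le_add_self.trans h.le)) (opow_ne_zero _ omega0_ne_zero)

lemma stepDown_one (n : ℕ) (a : Ordinal.{0}) : a < eps0 → a ≠ 0 → stepDown n a 1 := by
  induction a using WellFoundedLT.induction with
  | _ a ih =>
    intro he h0
    by_cases hf : fundSeq a n = 0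
    · rw [eq_one_of_fundSeq_eq_zero he h0 hf]; exact Relation.ReflTransGen.refl
    · have hl := fundSeq_lt n a he h0
      exact (stepDown_step n a).trans' (ih _ hl (hl.trans he) hf)

lemma fundSeq_add (n : ℕ) {a g : Ordinal.{0}} (m : Ordinal.{0}) (he : a < eps0) (h0 : a ≠ 0)
    (hle : a ≤ omega0 ^ g) : fundSeq (omega0 ^ g * m + a) n = omega0 ^ g * m + fundSeq a n := by
  have key : ∀ c q : Ordinal.{0}, omega0 ^ c * (q + 1) ≤ omega0 ^ g → c ≤ g := fun c q h =>
    (opow_le_opow_iff_right one_lt_om).1 ((self_le_opow_mul c q).trans h)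
  have split : ∀ c q : Ordinal.{0}, c ≤ g → omega0 ^ g * m + omega0 ^ c * q =
      omega0 ^ c * (omega0 ^ (g - c) * m + q) := fun c q h => by
    rw [mul_add, ← mul_assoc, ← opow_add, Ordinal.add_sub_cancel_of_le h]
  rcases fund_cases a with rfl | ⟨b, rfl⟩ | ⟨d, q, rfl⟩ | ⟨c, q, hc, rfl⟩
  · exact absurd rfl h0
  · rw [← add_assoc, fundSeq_succ, fundSeq_succ]
  · have hd := key _ _ hle
    rw [decomp_shift hd, fundSeq_opow_succ, fundSeq_opow_succ, ← split _ _ hd, add_assoc]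
  · have hcg := key _ _ hle
    have hce := exp_lt_eps0 he
    rw [decomp_shift hcg, fundSeq_opow_limit _ _ hc hce, fundSeq_opow_limit _ _ hc hce,
      ← split _ _ hcg, add_assoc]

/-- Step-downs may be performed behind a summand whose Cantor normal form has only exponents
`≥ γ`, as long as they start at most at `ω ^ γ`. -/
lemma stepDown_add {n : ℕ} {a b g : Ordinal.{0}} (m : Ordinal.{0}) (h : stepDown n a b)
    (he : a < eps0) (hle : a ≤ omega0 ^ g) :
    stepDown n (omega0 ^ g * m + a) (omega0 ^ g * m + b) := by
  induction h using Relation.ReflTransGen.head_induction_on with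
  | refl => exact Relation.ReflTransGen.refl
  | head hac _ ih =>
    subst hac
    rename_i x _
    have hl := fundSeq_le n he
    have ih' := ih (hl.trans_lt he) (hl.trans hle)
    rcases eq_or_ne x 0 with rfl | h0
    · rwa [fundSeq_zero] at ih'
    · exact Relation.ReflTransGen.head (fundSeq_add n m he h0 hle) ih'

lemma stepDown_opow_mul (n : ℕ) {d : Ordinal.{0}} (hd : d < eps0) {k m : ℕ} (h : k ≤ m) :
    stepDown n (omega0 ^ d * ((m : Ordinal) + 1)) (omega0 ^ d * ((k : Ordinal) + 1)) := by
  induction m, h using Nat.le_induction with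
  | base => exact Relation.ReflTransGen.refl
  | succ m _ ih =>
    refine stepDown.trans' ?_ ih
    have := stepDown_add (g := d) ((m : Ordinal) + 1) (stepDown_zero n _ (eps0_opow hd))
      (eps0_opow hd) le_rfl
    rw [add_zero, ← mul_add_one] at this
    exact_mod_cast this

lemma stepDown_opow {n : ℕ} {a b : Ordinal.{0}} (h : stepDown n a b) (he : a < eps0) :
    stepDown n (omega0 ^ a) (omega0 ^ b) := by
  induction h using Relation.ReflTransGen.head_induction_on with
  | refl => exact Relation.ReflTransGen.refl
  | head hac _ ih =>
    subst hac
    rename_i x _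
    refine stepDown.trans' ?_ (ih ((fundSeq_le n he).trans_lt he))
    rcases ord_cases x with rfl | ⟨d, rfl⟩ | hx
    · rw [fundSeq_zero]; exact Relation.ReflTransGen.refl
    · rw [fundSeq_succ]
      have h1 := stepDown_step n (omega0 ^ (d + 1))
      rw [fundSeq_opow_succ'] at h1
      have h2 := stepDown_opow_mul n ((lt_add_one d).trans he) (Nat.zero_le n)
      simp only [Nat.cast_zero, zero_add, mul_one] at h2
      exact h1.trans' h2
    · rw [← fundSeq_opow_limit' n hx he]
      exact stepDown_step n _

/-! ### Descending to arbitrary smaller ordinals -/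

/-- Any ordinal below a non-successor `b` lies below some member of its fundamental sequence. -/
lemma exists_lt_fundSeq (b : Ordinal.{0}) : b < eps0 → (¬ ∃ c, b = c + 1) → ∀ a < b,
    ∃ k, a < fundSeq b k := by
  induction b using WellFoundedLT.induction with
  | _ b ih =>
    intro he hs a ha
    rcases fund_cases b with rfl | ⟨c, rfl⟩ | ⟨d, m, rfl⟩ | ⟨g, m, hg, rfl⟩
    · exact absurd ha not_lt_zero
    · exact absurd ⟨c, rfl⟩ hs
    · rw [mul_add_one, lt_add_iff (opow_ne_zero _ omega0_ne_zero)] at ha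
      obtain ⟨x, hx, hax⟩ := ha
      rw [← Order.succ_eq_add_one, lt_omega0_opow_succ] at hx
      obtain ⟨k, hk⟩ := hx
      refine ⟨k, hax.trans_lt ?_⟩
      rw [fundSeq_opow_succ, add_lt_add_iff_left, mul_add_one]
      exact hk.trans_le le_self_add
    · have hge := exp_lt_eps0 he
      rw [mul_add_one, lt_add_iff (opow_ne_zero _ omega0_ne_zero)] at ha
      obtain ⟨x, hx, hax⟩ := ha
      obtain ⟨c, hc, hxc⟩ := (lt_opow_of_isSuccLimit omega0_ne_zero hg).1 hx
      have hgs : ¬ ∃ c, g = c + 1 := by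
        rintro ⟨c, rfl⟩
        simp at hg
      obtain ⟨k, hk⟩ := ih g ((lt_opow_self hge).trans_le (self_le_opow_mul g m)) hge hgs c hc
      refine ⟨k, hax.trans_lt ?_⟩
      rw [fundSeq_opow_limit m k hg hge, add_lt_add_iff_left]
      exact hxc.trans ((opow_lt_opow_iff_right one_lt_om).2 hk)

/-- The `n`-th member of a fundamental sequence steps down, with the same parameter `n`, to every
earlier member.  This is what makes the threshold in `eventually_stepDown` uniform in `n`. -/
lemma stepDown_fundSeq {k n : ℕ} (hkn : k ≤ n) (b : Ordinal.{0}) :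
    b < eps0 → stepDown n (fundSeq b n) (fundSeq b k) := by
  induction b using WellFoundedLT.induction with
  | _ b ih =>
    intro he
    rcases fund_cases b with rfl | ⟨c, rfl⟩ | ⟨d, m, rfl⟩ | ⟨g, m, hg, rfl⟩
    · rw [fundSeq_zero, fundSeq_zero]; exact Relation.ReflTransGen.refl
    · rw [fundSeq_succ, fundSeq_succ]; exact Relation.ReflTransGen.refl
    · have hde := (lt_add_one d).trans (exp_lt_eps0 he)
      have hlt : omega0 ^ d * ((n : Ordinal) + 1) < omega0 ^ (d + 1) := by
        exact_mod_cast opow_mul_lt_opow (natCast_lt_omega0 (n + 1)) (lt_add_one d)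
      rw [fundSeq_opow_succ, fundSeq_opow_succ]
      exact stepDown_add m (stepDown_opow_mul n hde hkn)
        (hlt.trans (eps0_opow (exp_lt_eps0 he))) hlt.le
    · have hge := exp_lt_eps0 he
      have hl := fundSeq_le n hge
      rw [fundSeq_opow_limit m n hg hge, fundSeq_opow_limit m k hg hge]
      exact stepDown_add m
        (stepDown_opow (ih g ((lt_opow_self hge).trans_le (self_le_opow_mul g m)) hge)
          (hl.trans_lt hge))
        (eps0_opow (hl.trans_lt hge)) ((opow_le_opow_iff_right one_lt_om).2 hl)

/-- Step down to `{b}(n)`, then to a fixed member `{b}(k)` above `a`, and apply induction there. -/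
lemma eventually_stepDown (b : Ordinal.{0}) : b < eps0 → ∀ a ≤ b,
    ∃ n₀ : ℕ, ∀ n ≥ n₀, stepDown n b a := by
  induction b using WellFoundedLT.induction with
  | _ b ih =>
    intro he a hab
    rcases hab.eq_or_lt with rfl | hlt
    · exact ⟨0, fun _ _ => Relation.ReflTransGen.refl⟩
    by_cases hs : ∃ c, b = c + 1
    · obtain ⟨c, rfl⟩ := hs
      have hc := lt_add_one c
      obtain ⟨n₀, h⟩ := ih c hc (hc.trans he) a (Order.lt_add_one_iff.1 hlt)
      refine ⟨n₀, fun n hn => ?_⟩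
      have h1 := stepDown_step n (c + 1)
      rw [fundSeq_succ] at h1
      exact h1.trans' (h n hn)
    · obtain ⟨k, hk⟩ := exists_lt_fundSeq b he hs a hlt
      have hkb := fundSeq_lt k b he (ne_zero_of_lt hlt)
      obtain ⟨n₀, h⟩ := ih _ hkb (hkb.trans he) a hk.le
      refine ⟨max n₀ k, fun n hn => ?_⟩
      exact ((stepDown_step n b).trans' (stepDown_fundSeq (le_of_max_le_right hn) b he)).trans'
        (h n (le_of_max_le_left hn))

/-! ### Towers -/

lemma omegaTower_lt_eps0 (m : ℕ) {a : Ordinal.{0}} (ha : a < eps0) : omegaTower m a < eps0 := by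
  induction m with
  | zero => exact ha
  | succ m ih => exact eps0_opow ih

lemma one_lt_eps0 : (1 : Ordinal.{0}) < eps0 := by
  have h0 : (0 : Ordinal.{0}) < eps0 := lt_nfp_iff.2 ⟨1, by simp⟩
  simpa using eps0_opow h0

lemma omegaTower_add (m k : ℕ) (a : Ordinal.{0}) :
    omegaTower (m + k) a = omegaTower m (omegaTower k a) := by
  induction m with
  | zero => rw [Nat.zero_add]; rfl
  | succ m ih => rw [Nat.succ_add]; exact congrArg (omega0 ^ ·) ih

lemma stepDown_omegaTower {n : ℕ} {a b : Ordinal.{0}} (h : stepDown n a b) (he : a < eps0)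
    (m : ℕ) : stepDown n (omegaTower m a) (omegaTower m b) := by
  induction m with
  | zero => exact h
  | succ m ih => exact stepDown_opow ih (omegaTower_lt_eps0 m he)

lemma omegaTower_one_ne_zero (m : ℕ) : omegaTower m 1 ≠ 0 := by
  cases m with
  | zero => exact one_ne_zero
  | succ m => exact opow_ne_zero _ omega0_ne_zero

lemma exists_lt_omegaTower {a : Ordinal.{0}} (h : a < eps0) : ∃ m, a < omegaTower m 1 := by
  obtain ⟨m, hm⟩ := lt_nfp_iff.1 h
  refine ⟨m, hm.trans_le ?_⟩
  clear hm
  induction m with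
  | zero => exact zero_le_one
  | succ m ih =>
    rw [Function.iterate_succ_apply']
    exact (opow_le_opow_iff_right one_lt_om).2 ih

/-- For each ordinal `α < ε₀` there exists `N > 0` with `ω_N →_N α+1`. -/
theorem stmt11 : ∀ α : Ordinal.{0}, α < eps0 →
    ∃ N : ℕ, 0 < N ∧ stepDown N (omegaTower N 1) (α + 1) := by
  intro α hα
  obtain ⟨m, hm⟩ := exists_lt_omegaTower hα
  obtain ⟨n₀, h⟩ := eventually_stepDown _ (omegaTower_lt_eps0 m one_lt_eps0) (α + 1)
    (Order.add_one_le_of_lt hm)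
  -- `N` must be positive, at least `m` for the tower to contain `ω_m`, and at least `n₀`.
  refine ⟨m + (n₀ + 1), by omega, stepDown.trans' ?_ (h _ (by omega))⟩
  rw [omegaTower_add]
  have he := omegaTower_lt_eps0 (n₀ + 1) one_lt_eps0
  exact stepDown_omegaTower (stepDown_one _ _ he (omegaTower_one_ne_zero _)) he m

end
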